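/- Let N ≥ 1 and let A be an N×N matrix over ℂ with det A ≠ 0. Suppose α_1, …, α_n are pairwise distinct nonzero complex numbers and e_1, …, e_n ≥ 1 are integers such that det(E − A·z) = (−1)^N · det A · Π_{k=1}^n (z − α_k)^{e_k} as polynomials in z, and suppose A_{k,j} (for 1 ≤ k ≤ n, 1 ≤ j ≤ e_k) are complex numbers such that for every complex z ∉ {α_1, …, α_n}: sum(adj(E − A·z)·A)/det(E − A·z) = (1/((−1)^N det A)) · Σ_{k=1}^n Σ_{j=1}^{e_k} A_{k,j}/(z − α_k)^j. Setting A_{k,2} := 0 whenever e_k = 1, we have Σ_{k=1}^n (−α_k · A_{k,1} − A_{k,2}) = (−1)^N · sum(adj(A)). -/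

import Mathlib

open Polynomial Matrix

/-! In the coordinate `w = z⁻¹` at infinity and after division by `w`, the two sides of the
partial fraction decomposition become regular at `w = 0`: the left side becomes the sum of the
entries of `-(1 - w A⁻¹)⁻¹ = -1 - w A⁻¹ - ⋯`, and a pole at `a` contributes
`b₁ + (a b₁ + b₂) w + ⋯`. Comparing the coefficients of `w` gives the result. -/

open Filter Topology Bornology

section Uniqueness

variable {𝕜 F : Type*} [NontriviallyNormedField 𝕜] [NormedAddCommGroup F] [NormedSpace 𝕜 F]

lemma hasDerivAt_unique_of_eventuallyEq_nhdsNE {f g : 𝕜 → F} {f' g' : F} {x : 𝕜}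
    (hf : HasDerivAt f f' x) (hg : HasDerivAt g g' x) (hfg : f =ᶠ[𝓝[≠] x] g) : f' = g' :=
  hf.unique <| hg.congr_of_eventuallyEq <|
    (hf.continuousAt.eventuallyEq_nhds_iff_eventuallyEq_nhdsNE hg.continuousAt).1 hfg

end Uniqueness

section Resolvent

variable {m : Type*} [Fintype m] [DecidableEq m]

lemma sum_adjugate_mul_div_det {K : Type*} [Field K] (M A : Matrix m m K) :
    (∑ i, ∑ j, (M.adjugate * A) i j) / M.det = ∑ i, ∑ j, (M⁻¹ * A) i j := by
  simp only [Matrix.inv_def, Ring.inverse_eq_inv, Matrix.smul_mul, Matrix.smul_apply, smul_eq_mul,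
    ← Finset.mul_sum, div_eq_inv_mul]

lemma inv_one_sub_inv_smul_mul {K : Type*} [Field K] {A : Matrix m m K} (hA : IsUnit A.det)
    {w : K} (hw : w ≠ 0) (hdet : IsUnit (1 - w • A⁻¹).det) :
    (1 - w⁻¹ • A)⁻¹ * A = -w • (1 - w • A⁻¹)⁻¹ := by
  have hfactor : A⁻¹ * (1 - w⁻¹ • A) = -w⁻¹ • (1 - w • A⁻¹) := by
    rw [mul_sub, mul_one, Matrix.mul_smul, Matrix.nonsing_inv_mul _ hA, smul_sub, smul_smul,
      neg_mul, inv_mul_cancel₀ hw]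
    module
  calc (1 - w⁻¹ • A)⁻¹ * A = (A⁻¹ * (1 - w⁻¹ • A))⁻¹ := by
        rw [Matrix.mul_inv_rev, Matrix.nonsing_inv_nonsing_inv _ hA]
    _ = -w • (1 - w • A⁻¹)⁻¹ := by
        rw [hfactor]
        refine Matrix.inv_eq_left_inv ?_
        rw [Matrix.smul_mul, Matrix.mul_smul, smul_smul, Matrix.nonsing_inv_mul _ hdet,
          neg_mul_neg, mul_inv_cancel₀ hw, one_smul]

lemma inv_one_sub_smul_sub_one {R : Type*} [CommRing R] {M : Matrix m m R} {w : R}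
    (hdet : IsUnit (1 - w • M).det) : (1 - w • M)⁻¹ - 1 = w • (M * (1 - w • M)⁻¹) := by
  have h := Matrix.mul_nonsing_inv _ hdet
  rw [sub_mul, one_mul, Matrix.smul_mul] at h
  rw [sub_eq_iff_eq_add, ← sub_eq_iff_eq_add', h]

variable {𝕜 : Type*}

lemma eventually_isUnit_det_one_sub_smul [Field 𝕜] [TopologicalSpace 𝕜] [IsTopologicalRing 𝕜]
    [T1Space 𝕜] (M : Matrix m m 𝕜) : ∀ᶠ w in 𝓝 (0 : 𝕜), IsUnit (1 - w • M).det := by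
  have hcont : Continuous fun w : 𝕜 ↦ (1 - w • M).det := by fun_prop
  simpa only [isUnit_iff_ne_zero] using hcont.continuousAt.eventually_ne (by simp)

lemma continuousAt_inv_one_sub_smul [Field 𝕜] [TopologicalSpace 𝕜] [IsTopologicalDivisionRing 𝕜]
    (M : Matrix m m 𝕜) : ContinuousAt (fun w : 𝕜 ↦ (1 - w • M)⁻¹) 0 := by
  simp only [Matrix.inv_def, Ring.inverse_eq_inv]
  have hcont : Continuous fun w : 𝕜 ↦ 1 - w • M := by fun_prop
  exact (hcont.matrix_det.continuousAt.inv₀ (by simp)).smul hcont.matrix_adjugate.continuousAt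

variable [NontriviallyNormedField 𝕜]

lemma hasDerivAt_inv_one_sub_smul_apply (M : Matrix m m 𝕜) (i j : m) :
    HasDerivAt (fun w : 𝕜 ↦ (1 - w • M)⁻¹ i j) (M i j) 0 := by
  have hcont : ContinuousAt (fun w : 𝕜 ↦ (M * (1 - w • M)⁻¹) i j) 0 :=
    (continuous_apply_apply i j).continuousAt.comp
      (continuousAt_const.mul (continuousAt_inv_one_sub_smul M))
  have hlim : Tendsto (fun w : 𝕜 ↦ (M * (1 - w • M)⁻¹) i j) (𝓝[≠] 0) (𝓝 (M i j)) := by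
    simpa using hcont.tendsto.mono_left nhdsWithin_le_nhds
  rw [hasDerivAt_iff_tendsto_slope_zero]
  refine hlim.congr' ?_
  filter_upwards [self_mem_nhdsWithin, nhdsWithin_le_nhds (eventually_isUnit_det_one_sub_smul M)]
    with w hw hdet
  have hslope := congrFun₂ (inv_one_sub_smul_sub_one hdet) i j
  simp only [Matrix.sub_apply, Matrix.smul_apply] at hslope
  rw [zero_add, zero_smul, sub_zero, inv_one, hslope, inv_smul_smul₀ hw]

lemma hasDerivAt_sum_inv_one_sub_smul (M : Matrix m m 𝕜) :
    HasDerivAt (fun w : 𝕜 ↦ ∑ i, ∑ j, (1 - w • M)⁻¹ i j) (∑ i, ∑ j, M i j) 0 :=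
  .fun_sum fun i _ ↦ .fun_sum fun j _ ↦ hasDerivAt_inv_one_sub_smul_apply M i j

lemma eventually_sum_adjugate_mul_div_det_eq {A : Matrix m m 𝕜} (hA : A.det ≠ 0) :
    ∀ᶠ w in 𝓝[≠] (0 : 𝕜),
      (∑ i, ∑ j, ((1 - w⁻¹ • A).adjugate * A) i j) / (1 - w⁻¹ • A).det =
        w * -∑ i, ∑ j, (1 - w • A⁻¹)⁻¹ i j := by
  filter_upwards [self_mem_nhdsWithin, nhdsWithin_le_nhds (eventually_isUnit_det_one_sub_smul A⁻¹)]
    with w hw hdet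
  rw [sum_adjugate_mul_div_det, inv_one_sub_inv_smul_mul hA.isUnit hw hdet]
  simp only [Matrix.smul_apply, smul_eq_mul, neg_mul, mul_neg, Finset.sum_neg_distrib,
    ← Finset.mul_sum]

end Resolvent

section PrincipalPart

/-- The principal part `∑ b j / (z - a) ^ j`, `1 ≤ j ≤ e`, at a pole `a`, seen from infinity: it is
written in the coordinate `w = z⁻¹` and divided by `w`, so that it is regular at `w = 0`. The index
is `i = j - 1`. -/
def principalPartAtInfty {K : Type*} [Field K] (a : K) (e : ℕ) (b : ℕ → K) (w : K) : K :=
  ∑ i ∈ Finset.range e, b (i + 1) * (w ^ i / (1 - a * w) ^ (i + 1))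

lemma sum_div_inv_sub_pow_eq_mul_principalPartAtInfty {K : Type*} [Field K] (a : K)
    (e : ℕ) (b : ℕ → K) {w : K} (hw : w ≠ 0) :
    ∑ j ∈ Finset.Icc 1 e, b j / (w⁻¹ - a) ^ j = w * principalPartAtInfty a e b w := by
  have hsub : w⁻¹ - a = (1 - a * w) / w := by field_simp
  rw [principalPartAtInfty, Finset.mul_sum, ← Finset.Ico_add_one_right_eq_Icc,
    Finset.sum_Ico_eq_sum_range, Nat.add_sub_cancel]
  refine Finset.sum_congr rfl fun i _ ↦ ?_
  rw [hsub, div_pow, div_div_eq_mul_div, add_comm 1 i, pow_succ w]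
  ring

variable {𝕜 : Type*} [NontriviallyNormedField 𝕜]

lemma hasDerivAt_pow_div_one_sub_mul_pow (a : 𝕜) (i : ℕ) :
    HasDerivAt (fun w : 𝕜 ↦ w ^ i / (1 - a * w) ^ (i + 1))
      (if i = 0 then a else if i = 1 then 1 else 0) 0 := by
  have hden : HasDerivAt (fun w : 𝕜 ↦ 1 - a * w) (-a) 0 := by
    simpa using ((hasDerivAt_id (0 : 𝕜)).const_mul a).const_sub 1
  have hquot := (hasDerivAt_pow i (0 : 𝕜)).fun_div (hden.fun_pow (i + 1)) (by simp)
  refine hquot.congr_deriv ?_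
  rcases i with _ | _ | i <;> simp

lemma hasDerivAt_principalPartAtInfty (a : 𝕜) {e : ℕ} (he : 1 ≤ e) (b : ℕ → 𝕜) :
    HasDerivAt (principalPartAtInfty a e b) (a * b 1 + if e = 1 then 0 else b 2) 0 := by
  have hsum : HasDerivAt (principalPartAtInfty a e b) (∑ i ∈ Finset.range e,
      b (i + 1) * if i = 0 then a else if i = 1 then 1 else 0) 0 :=
    .fun_sum fun i _ ↦ (hasDerivAt_pow_div_one_sub_mul_pow a i).const_mul _
  refine hsum.congr_deriv ?_
  obtain rfl | ⟨d, rfl⟩ : e = 1 ∨ ∃ d, e = d + 2 := by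
    rcases e with _ | _ | d <;> simp at he ⊢
  · simp [mul_comm]
  · simp [Finset.sum_range_succ', mul_comm, add_comm]

end PrincipalPart

theorem sum_neg_alpha_mul_residue_sub_general {𝕜 m ι : Type*} [NontriviallyNormedField 𝕜]
    [Fintype m] [DecidableEq m] [Fintype ι] (A : Matrix m m 𝕜) (hA : A.det ≠ 0)
    (α : ι → 𝕜) (e : ι → ℕ) (he : ∀ k, 1 ≤ e k) (B : ι → ℕ → 𝕜)
    (hpart : ∀ᶠ z in cobounded 𝕜,
      (∑ i, ∑ j, ((1 - z • A).adjugate * A) i j) / (1 - z • A).det =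
        (1 / ((-1) ^ Fintype.card m * A.det)) *
          ∑ k, ∑ j ∈ Finset.Icc 1 (e k), B k j / (z - α k) ^ j) :
    (∑ k, (-(α k) * B k 1 - (if e k = 1 then 0 else B k 2))) =
      (-1) ^ Fintype.card m * ∑ i, ∑ j, A.adjugate i j := by
  set c := (-1) ^ Fintype.card m * A.det with hc
  have hc₀ : c ≠ 0 := mul_ne_zero (pow_ne_zero _ (neg_ne_zero.2 one_ne_zero)) hA
  have hpoles : HasDerivAt (fun w ↦ ∑ k, principalPartAtInfty (α k) (e k) (B k) w)
      (∑ k, (α k * B k 1 + if e k = 1 then 0 else B k 2)) 0 :=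
    .fun_sum fun k _ ↦ hasDerivAt_principalPartAtInfty (α k) (he k) (B k)
  have hresolvent := (hasDerivAt_sum_inv_one_sub_smul A⁻¹).const_mul (-c)
  have heq : (fun w ↦ ∑ k, principalPartAtInfty (α k) (e k) (B k) w) =ᶠ[𝓝[≠] 0]
      fun w ↦ -c * ∑ i, ∑ j, (1 - w • A⁻¹)⁻¹ i j := by
    filter_upwards [self_mem_nhdsWithin, tendsto_inv₀_nhdsNE_zero.eventually hpart,
      eventually_sum_adjugate_mul_div_det_eq hA] with w hw hdecomp hinv
    simp only [hinv, sum_div_inv_sub_pow_eq_mul_principalPartAtInfty _ _ _ hw,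
      ← Finset.mul_sum] at hdecomp
    rw [mul_left_comm, mul_right_inj' hw, one_div, eq_inv_mul_iff_mul_eq₀ hc₀] at hdecomp
    rw [← hdecomp, mul_neg, neg_mul]
  have hadj : ∑ i, ∑ j, A.adjugate i j = A.det * ∑ i, ∑ j, A⁻¹ i j := by
    rw [mul_comm, ← div_eq_iff hA]
    simpa only [mul_one] using sum_adjugate_mul_div_det A 1
  have hcoeff := hasDerivAt_unique_of_eventuallyEq_nhdsNE hpoles hresolvent heq
  calc _ = -∑ k, (α k * B k 1 + if e k = 1 then 0 else B k 2) := by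
        simp only [← Finset.sum_neg_distrib, neg_add, neg_mul, sub_eq_add_neg]
    _ = c * ∑ i, ∑ j, A⁻¹ i j := by rw [hcoeff, neg_mul, neg_neg]
    _ = _ := by rw [hadj, hc, mul_assoc]

/-- With the same hypotheses as in the partial fraction setup
(`det A ≠ 0`, factorization of `det(E - A·z)`, partial fraction decomposition of
`sum(adj(E - A·z)·A)/det(E - A·z)` with coefficients `A_{k,j}`), and setting `A_{k,2} := 0`
whenever `e_k = 1`, we have
`Σ_k (-α_k · A_{k,1} - A_{k,2}) = (-1)^N · sum(adj A)`. -/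
theorem sum_neg_alpha_mul_residue_sub
    (N n : ℕ) (hN : 1 ≤ N) (A : Matrix (Fin N) (Fin N) ℂ) (hA : A.det ≠ 0)
    (α : Fin n → ℂ) (hα : ∀ k, α k ≠ 0) (hinj : Function.Injective α)
    (e : Fin n → ℕ) (he : ∀ k, 1 ≤ e k)
    (hfact : Matrix.det ((1 : Matrix (Fin N) (Fin N) ℂ[X]) -
        (Polynomial.X : ℂ[X]) • A.map Polynomial.C) =
      Polynomial.C ((-1) ^ N * A.det) *
        ∏ k, (Polynomial.X - Polynomial.C (α k)) ^ (e k))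
    (B : Fin n → ℕ → ℂ)
    (hpart : ∀ z : ℂ, (∀ k, z ≠ α k) →
      (∑ i, ∑ j, (Matrix.adjugate ((1 : Matrix (Fin N) (Fin N) ℂ) - z • A) * A) i j) /
          Matrix.det ((1 : Matrix (Fin N) (Fin N) ℂ) - z • A) =
        (1 / ((-1) ^ N * A.det)) *
          ∑ k, ∑ j ∈ Finset.Icc 1 (e k), B k j / (z - α k) ^ j) :
    (∑ k, (-(α k) * B k 1 - (if e k = 1 then 0 else B k 2))) =
      (-1) ^ N * ∑ i, ∑ j, A.adjugate i j := by
  have hpart_infty := (eventually_all.2 fun k ↦ eventually_ne_cobounded (α k)).mono hpart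
  simpa only [Fintype.card_fin] using
    sum_neg_alpha_mul_residue_sub_general A hA α e he B (by simpa only [Fintype.card_fin])
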